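/- For any two unit vectors x, y in R^n and a fixed unit vector e, if f(v) = 1 when e·v ≥ 0 and f(v) = -1 otherwise, then the average over the orthogonal group O(n) (with normalized Haar measure μ) of f(Tx)·f(Ty) equals (2/π)·arcsin(x·y) (Grothendieck's identity). -/

import Mathlib

open MeasureTheory Real
open scoped RealInnerProductSpace Matrix

noncomputable instance (n : ℕ) :
    MeasurableSpace (Matrix.orthogonalGroup (Fin n) ℝ) := borel _

instance (n : ℕ) : BorelSpace (Matrix.orthogonalGroup (Fin n) ℝ) := ⟨rfl⟩

theorem map_mul_right_eq_self_of_isProbabilityMeasure {G : Type*} [Group G] [MeasurableSpace G]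
    [MeasurableMul₂ G] [MeasurableInv G] (μ : Measure G) [IsProbabilityMeasure μ]
    [μ.IsMulLeftInvariant] (g : G) : μ.map (· * g) = μ := by
  have key : μ = μ.inv := by
    ext s hs
    have hm : Measurable fun p : G × G => p.1 * p.2 := measurable_mul
    have h1 : (μ.inv.prod μ) ((fun p : G × G => p.1 * p.2) ⁻¹' s) = μ s := by
      rw [Measure.prod_apply (hm hs)]
      have : ∀ a : G, μ (Prod.mk a ⁻¹' ((fun p : G × G => p.1 * p.2) ⁻¹' s)) = μ s :=
        fun a => measure_preimage_mul μ a s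
      have hu : μ.inv Set.univ = 1 := by rw [Measure.inv_apply]; simp
      simp [this, hu]
    have h2 : (μ.inv.prod μ) ((fun p : G × G => p.1 * p.2) ⁻¹' s) = μ.inv s := by
      rw [Measure.prod_apply_symm (hm hs)]
      have : ∀ a : G, μ.inv ((fun b => (b, a)) ⁻¹' ((fun p : G × G => p.1 * p.2) ⁻¹' s))
          = μ.inv s :=
        fun a => measure_preimage_mul_right μ.inv a s
      simp [this]
    rw [← h1, h2]
  rw [key]
  exact map_mul_right_eq_self μ.inv g

instance Matrix.orthogonalGroup.secondCountableTopology (n : ℕ) :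
    SecondCountableTopology (Matrix.orthogonalGroup (Fin n) ℝ) :=
  have : SecondCountableTopology (Matrix (Fin n) (Fin n) ℝ) :=
    inferInstanceAs (SecondCountableTopology (Fin n → Fin n → ℝ))
  TopologicalSpace.Subtype.secondCountableTopology _

instance Matrix.orthogonalGroup.isTopologicalGroup (n : ℕ) :
    IsTopologicalGroup (Matrix.orthogonalGroup (Fin n) ℝ) :=
  inferInstanceAs (IsTopologicalGroup (unitary (Matrix (Fin n) (Fin n) ℝ)))

theorem Matrix.orthogonalGroup.exists_mulVec_eq {n : ℕ} {s : Set (Fin n)}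
    {v w : Fin n → EuclideanSpace ℝ (Fin n)}
    (hv : Orthonormal ℝ (s.domRestrict v)) (hw : Orthonormal ℝ (s.domRestrict w)) :
    ∃ g : Matrix.orthogonalGroup (Fin n) ℝ,
      ∀ i ∈ s, WithLp.toLp 2 ((g : Matrix (Fin n) (Fin n) ℝ) *ᵥ (v i).ofLp) = w i := by
  obtain ⟨b, hb⟩ := hv.exists_orthonormalBasis_extension_of_card_eq (by simp)
  obtain ⟨c, hc⟩ := hw.exists_orthonormalBasis_extension_of_card_eq (by simp)
  let F := b.equiv c (Equiv.refl _)
  let B := EuclideanSpace.basisFun (Fin n) ℝ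
  refine ⟨⟨_, F.toMatrix_mem_unitaryGroup B B⟩, fun i hi => ?_⟩
  have h := LinearMap.toMatrix_mulVec_repr B.toBasis B.toBasis F.toLinearEquiv.toLinearMap (v i)
  have h2 : F (v i) = w i := by
    rw [← hb i hi, ← hc i hi]; simp [F]
  rw [← h2]
  ext j
  have := congrFun h j
  exact this

theorem measurable_ite_nonneg : Measurable fun r : ℝ => if 0 ≤ r then (1 : ℝ) else -1 :=
  Measurable.ite measurableSet_Ici measurable_const measurable_const

theorem intervalIntegral_eq_of_forall_mem_Ioo {g : ℝ → ℝ} {a b c : ℝ} (hab : a ≤ b)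
    (h : ∀ t ∈ Set.Ioo a b, g t = c) :
    IntervalIntegrable g volume a b ∧ ∫ t in a..b, g t = (b - a) * c := by
  constructor
  · refine (intervalIntegrable_const (c := c)).congr_uIoo ?_
    rw [Set.uIoo_of_le hab]
    exact fun t ht => (h t ht).symm
  · rw [intervalIntegral.integral_of_le hab, integral_Ioc_eq_integral_Ioo,
      setIntegral_congr_fun measurableSet_Ioo h]
    simp [hab]


theorem integral_sign_cos_mul_sign_cos_add {θ : ℝ} (h0 : 0 ≤ θ) (hπ : θ ≤ π) :
    ∫ t in (-(π / 2))..(-(π / 2) + 2 * π),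
      (if 0 ≤ cos t then (1 : ℝ) else -1) * (if 0 ≤ cos (t + θ) then (1 : ℝ) else -1)
      = 2 * π - 4 * θ := by
  have hpi := pi_pos
  have pos {t : ℝ} (h1 : -(π / 2) < t) (h2 : t < π / 2) : 0 ≤ cos t :=
    (cos_pos_of_mem_Ioo ⟨h1, h2⟩).le
  have neg {t : ℝ} (h1 : π / 2 < t) (h2 : t < π + π / 2) : ¬ 0 ≤ cos t :=
    not_le.2 (cos_neg_of_pi_div_two_lt_of_lt h1 h2)
  have pos' {t : ℝ} (h1 : π + π / 2 < t) (h2 : t < 2 * π + π / 2) : 0 ≤ cos t := by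
    rw [← cos_sub_two_pi]
    exact pos (by linarith) (by linarith)
  set g : ℝ → ℝ := fun t =>
    (if 0 ≤ cos t then (1 : ℝ) else -1) * (if 0 ≤ cos (t + θ) then (1 : ℝ) else -1) with hg
  obtain ⟨i1, e1⟩ := intervalIntegral_eq_of_forall_mem_Ioo (g := g) (a := -(π / 2))
    (b := π / 2 - θ) (c := 1) (by linarith) fun t ⟨h1, h2⟩ => by
      simp [hg, pos (t := t) (by linarith) (by linarith),
        pos (t := t + θ) (by linarith) (by linarith)]
  obtain ⟨i2, e2⟩ := intervalIntegral_eq_of_forall_mem_Ioo (g := g) (a := π / 2 - θ)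
    (b := π / 2) (c := -1) (by linarith) fun t ⟨h1, h2⟩ => by
      simp [hg, pos (t := t) (by linarith) (by linarith),
        neg (t := t + θ) (by linarith) (by linarith)]
  obtain ⟨i3, e3⟩ := intervalIntegral_eq_of_forall_mem_Ioo (g := g) (a := π / 2)
    (b := π + π / 2 - θ) (c := 1) (by linarith) fun t ⟨h1, h2⟩ => by
      simp [hg, neg (t := t) (by linarith) (by linarith),
        neg (t := t + θ) (by linarith) (by linarith)]
  obtain ⟨i4, e4⟩ := intervalIntegral_eq_of_forall_mem_Ioo (g := g) (a := π + π / 2 - θ)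
    (b := -(π / 2) + 2 * π) (c := -1) (by linarith) fun t ⟨h1, h2⟩ => by
      simp [hg, neg (t := t) (by linarith) (by linarith),
        pos' (t := t + θ) (by linarith) (by linarith)]
  rw [← intervalIntegral.integral_add_adjacent_intervals i1 (i2.trans (i3.trans i4)),
    ← intervalIntegral.integral_add_adjacent_intervals i2 (i3.trans i4),
    ← intervalIntegral.integral_add_adjacent_intervals i3 i4, e1, e2, e3, e4]
  ring

theorem integral_sign_mul_sign_rotate {a b : ℝ} (ha : a ≠ 0) {θ : ℝ} (h0 : 0 ≤ θ) (hπ : θ ≤ π) :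
    ∫ t in (-π)..π,
      (if 0 ≤ cos t * a + sin t * b then (1 : ℝ) else -1) *
        (if 0 ≤ cos (t + θ) * a + sin (t + θ) * b then (1 : ℝ) else -1)
      = 2 * π - 4 * θ := by
  set z : ℂ := ⟨a, b⟩ with hz
  have hz0 : 0 < ‖z‖ := norm_pos_iff.2 fun h => ha (by simpa [hz] using congrArg Complex.re h)
  have ha' : ‖z‖ * cos z.arg = a := Complex.norm_mul_cos_arg z
  have hb' : ‖z‖ * sin z.arg = b := Complex.norm_mul_sin_arg z
  have key (t : ℝ) : 0 ≤ cos t * a + sin t * b ↔ 0 ≤ cos (t - z.arg) := by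
    have : cos t * a + sin t * b = ‖z‖ * cos (t - z.arg) := by
      rw [cos_sub, ← ha', ← hb']; ring
    rw [this, mul_nonneg_iff_of_pos_left hz0]
  simp only [key, add_sub_right_comm]
  rw [intervalIntegral.integral_comp_sub_right (fun t =>
    (if 0 ≤ cos t then (1 : ℝ) else -1) * (if 0 ≤ cos (t + θ) then (1 : ℝ) else -1))]
  have per : Function.Periodic (fun t : ℝ =>
      (if 0 ≤ cos t then (1 : ℝ) else -1) * (if 0 ≤ cos (t + θ) then (1 : ℝ) else -1))
      (2 * π) := fun t => by
    simp only [cos_add_two_pi, add_right_comm t (2 * π) θ]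
  rw [← integral_sign_cos_mul_sign_cos_add h0 hπ, ← per.intervalIntegral_add_eq (-π - z.arg)]
  congr 1
  ring

section
open Matrix

theorem orthonormal_domRestrict_pair {n : ℕ} {i j : Fin n}
    {p q : EuclideanSpace ℝ (Fin n)} (hp : ‖p‖ = 1) (hq : ‖q‖ = 1) (hpq : ⟪p, q⟫ = 0) :
    Orthonormal ℝ (({i, j} : Set (Fin n)).domRestrict fun k => if k = i then p else q) := by
  rw [orthonormal_iff_ite]
  have hqp : ⟪q, p⟫ = 0 := by rw [real_inner_comm, hpq]
  rintro ⟨k, hk⟩ ⟨l, hl⟩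
  simp only [Set.domRestrict_apply, Subtype.mk.injEq]
  simp only [Set.mem_insert_iff, Set.mem_singleton_iff] at hk hl
  split_ifs <;> simp_all

theorem Matrix.orthogonalGroup.inner_toEuclideanLin {n : ℕ} (g : orthogonalGroup (Fin n) ℝ)
    (v w : EuclideanSpace ℝ (Fin n)) :
    ⟪toEuclideanLin (g : Matrix (Fin n) (Fin n) ℝ) v,
      toEuclideanLin (g : Matrix (Fin n) (Fin n) ℝ) w⟫ = ⟪v, w⟫ := by
  have h : (g : Matrix (Fin n) (Fin n) ℝ)ᵀ * g = 1 := (mem_orthogonalGroup_iff' _ _).1 g.2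
  simp only [EuclideanSpace.inner_eq_star_dotProduct, ofLp_toLpLin, toLin'_apply, star_trivial,
    dotProduct_mulVec, vecMul_mulVec]
  simp [h]

theorem Matrix.orthogonalGroup.toEuclideanLin_mul {n : ℕ} (g h : orthogonalGroup (Fin n) ℝ)
    (v : EuclideanSpace ℝ (Fin n)) :
    toEuclideanLin ((g * h : orthogonalGroup (Fin n) ℝ) : Matrix (Fin n) (Fin n) ℝ) v =
      toEuclideanLin (g : Matrix (Fin n) (Fin n) ℝ)
        (toEuclideanLin (h : Matrix (Fin n) (Fin n) ℝ) v) := by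
  ext i
  simp

theorem Matrix.orthogonalGroup.continuous_inner_toEuclideanLin {n : ℕ} :
    Continuous fun p : EuclideanSpace ℝ (Fin n) × orthogonalGroup (Fin n) ℝ ×
      EuclideanSpace ℝ (Fin n) =>
      ⟪p.1, toEuclideanLin (p.2.1 : Matrix (Fin n) (Fin n) ℝ) p.2.2⟫ := by
  simp only [EuclideanSpace.inner_eq_star_dotProduct, ofLp_toLpLin, toLin'_apply, star_trivial]
  fun_prop

theorem Matrix.orthogonalGroup.ae_inner_toEuclideanLin_ne_zero {n : ℕ}
    (μ : Measure (orthogonalGroup (Fin n) ℝ)) [IsProbabilityMeasure μ] [μ.IsMulLeftInvariant]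
    {e u : EuclideanSpace ℝ (Fin n)} (he : ‖e‖ = 1) (hu : u ≠ 0) :
    ∀ᵐ T : orthogonalGroup (Fin n) ℝ ∂μ,
      ⟪e, toEuclideanLin (T : Matrix (Fin n) (Fin n) ℝ) u⟫ ≠ 0 := by
  have hcont : Continuous fun p : EuclideanSpace ℝ (Fin n) × orthogonalGroup (Fin n) ℝ =>
      ⟪p.1, toEuclideanLin (p.2 : Matrix (Fin n) (Fin n) ℝ) u⟫ :=
    continuous_inner_toEuclideanLin.comp (f := fun p : EuclideanSpace ℝ (Fin n) ×
      orthogonalGroup (Fin n) ℝ => (p.1, p.2, u)) (by fun_prop)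
  have hS := measurableSet_eq_fun hcont.measurable (measurable_const (a := (0 : ℝ)))
  have hnull : (volume.prod μ) {p : EuclideanSpace ℝ (Fin n) × orthogonalGroup (Fin n) ℝ |
      ⟪p.1, toEuclideanLin (p.2 : Matrix (Fin n) (Fin n) ℝ) u⟫ = 0} = 0 := by
    rw [Measure.prod_apply_symm hS, lintegral_eq_zero_iff (measurable_measure_prodMk_right hS)]
    refine .of_forall fun T => ?_
    have hTu : toEuclideanLin (T : Matrix (Fin n) (Fin n) ℝ) u ≠ 0 := fun h => hu <| by
      rw [← inner_self_eq_zero (𝕜 := ℝ), ← inner_toEuclideanLin T, h, inner_zero_left]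
    have := Measure.addHaar_submodule volume
      (ℝ ∙ toEuclideanLin (T : Matrix (Fin n) (Fin n) ℝ) u)ᗮ
      (by simpa [Submodule.orthogonal_eq_top_iff] using hTu)
    refine Eq.trans (congrArg volume ?_) this
    ext v
    simp [Submodule.mem_orthogonal_singleton_iff_inner_left]
  have : Nontrivial (EuclideanSpace ℝ (Fin n)) := ⟨u, 0, hu⟩
  obtain ⟨v, hv, hv0⟩ := ((Measure.measure_ae_null_of_prod_null hnull).and
    (compl_mem_ae_iff.2 (measure_singleton (0 : EuclideanSpace ℝ (Fin n))))).exists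
  have hv0' : v ≠ 0 := hv0
  obtain ⟨i⟩ : Nonempty (Fin n) := by
    by_contra h
    rw [not_nonempty_iff] at h
    exact hu (Subsingleton.elim _ _)
  have horth {w : EuclideanSpace ℝ (Fin n)} (hw : ‖w‖ = 1) :
      Orthonormal ℝ (({i} : Set (Fin n)).domRestrict fun _ => w) :=
    ⟨fun _ => hw, fun a b hab => (hab (Subsingleton.elim a b)).elim⟩
  obtain ⟨g, hg⟩ := exists_mulVec_eq
    (horth (w := ‖v‖⁻¹ • v) (by rw [norm_smul, norm_inv, norm_norm, inv_mul_cancel₀ (by simpa)]))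
    (horth he)
  have hg' : toEuclideanLin (g : Matrix (Fin n) (Fin n) ℝ) (‖v‖⁻¹ • v) = e := hg i rfl
  rw [ae_iff, ← measure_preimage_mul μ g]
  refine Eq.trans (congrArg μ ?_) hv
  ext T
  simp only [Set.mem_preimage, Set.mem_ofPred_eq, not_not]
  rw [toEuclideanLin_mul, ← hg', inner_toEuclideanLin, real_inner_smul_left]
  simp [hv0']

theorem exists_inner_eq_zero_and_eq_cos_add_sin {n : ℕ} (hn : 2 ≤ n)
    {x y : EuclideanSpace ℝ (Fin n)} (hx : ‖x‖ = 1) (hy : ‖y‖ = 1) :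
    ∃ u : EuclideanSpace ℝ (Fin n), ‖u‖ = 1 ∧ ⟪x, u⟫ = 0 ∧
      y = cos (arccos ⟪x, y⟫) • x + sin (arccos ⟪x, y⟫) • u := by
  have hle := abs_le.1 (abs_real_inner_le_norm x y)
  rw [hx, hy, one_mul] at hle
  rw [cos_arccos hle.1 hle.2, sin_arccos]
  set c := ⟪x, y⟫ with hc
  have hxx : ⟪x, x⟫ = 1 := by rw [real_inner_self_eq_norm_sq, hx, one_pow]
  have hxw : ⟪x, y - c • x⟫ = 0 := by
    rw [inner_sub_right, real_inner_smul_right, hxx, hc]; ring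
  have hw : √(1 - c ^ 2) = ‖y - c • x‖ := by
    rw [norm_eq_sqrt_real_inner]
    congr 1
    rw [inner_sub_left, real_inner_smul_left, hxw, inner_sub_right, real_inner_smul_right,
      real_inner_self_eq_norm_sq, hy, real_inner_comm, ← hc]
    ring
  rw [hw]
  by_cases h0 : y - c • x = 0
  · have : NeZero n := ⟨by omega⟩
    obtain ⟨b, hb⟩ := Orthonormal.exists_orthonormalBasis_extension_of_card_eq (𝕜 := ℝ)
      (E := EuclideanSpace ℝ (Fin n)) (ι := Fin n) (by simp) (v := fun _ => x)
      (s := {⟨0, by omega⟩}) ⟨fun _ => hx, fun a b hab => (hab (Subsingleton.elim a b)).elim⟩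
    refine ⟨b ⟨1, by omega⟩, b.norm_eq_one _, ?_, ?_⟩
    · rw [← hb ⟨0, by omega⟩ rfl]
      exact b.orthonormal.2 (by simp)
    · rw [h0, norm_zero, zero_smul, add_zero, ← sub_eq_zero, h0]
  · have hw0 := norm_ne_zero_iff.2 h0
    refine ⟨‖y - c • x‖⁻¹ • (y - c • x), ?_, ?_, ?_⟩
    · rw [norm_smul, norm_inv, norm_norm, inv_mul_cancel₀ hw0]
    · rw [real_inner_smul_right, hxw, mul_zero]
    · rw [smul_inv_smul₀ hw0]; abel

theorem Matrix.orthogonalGroup.exists_rotate {n : ℕ} (hn : 2 ≤ n)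
    {x u : EuclideanSpace ℝ (Fin n)} (hx : ‖x‖ = 1) (hu : ‖u‖ = 1) (hxu : ⟪x, u⟫ = 0) (t : ℝ) :
    ∃ g : orthogonalGroup (Fin n) ℝ, ∀ θ : ℝ,
      toEuclideanLin (g : Matrix (Fin n) (Fin n) ℝ) (cos θ • x + sin θ • u) =
        cos (t + θ) • x + sin (t + θ) • u := by
  have hux : ⟪u, x⟫ = 0 := by rw [real_inner_comm, hxu]
  have hxx : ⟪x, x⟫ = 1 := by rw [real_inner_self_eq_norm_sq, hx, one_pow]
  have huu : ⟪u, u⟫ = 1 := by rw [real_inner_self_eq_norm_sq, hu, one_pow]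
  have hnorm (a b : ℝ) (h : a ^ 2 + b ^ 2 = 1) : ‖a • x + b • u‖ = 1 := by
    rw [norm_eq_sqrt_real_inner, sqrt_eq_one]
    simp only [inner_add_left, inner_add_right, real_inner_smul_left, real_inner_smul_right,
      hxx, huu, hxu, hux]
    linarith
  obtain ⟨g, hg⟩ := exists_mulVec_eq
    (orthonormal_domRestrict_pair (i := (⟨0, by omega⟩ : Fin n)) (j := ⟨1, by omega⟩) hx hu hxu)
    (orthonormal_domRestrict_pair (p := cos t • x + sin t • u) (q := (-sin t) • x + cos t • u)
      (hnorm _ _ (cos_sq_add_sin_sq t)) (hnorm _ _ (by rw [neg_sq, sin_sq_add_cos_sq])) (by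
        simp only [inner_add_left, inner_add_right, real_inner_smul_left, real_inner_smul_right,
          hxx, huu, hxu, hux]
        ring))
  have h0 : toEuclideanLin (g : Matrix (Fin n) (Fin n) ℝ) x = cos t • x + sin t • u := by
    have h := hg _ (Or.inl rfl)
    rwa [if_pos rfl, if_pos rfl] at h
  have h1 : toEuclideanLin (g : Matrix (Fin n) (Fin n) ℝ) u = (-sin t) • x + cos t • u := by
    have h := hg _ (Or.inr rfl)
    rwa [if_neg (by simp), if_neg (by simp)] at h
  refine ⟨g, fun θ => ?_⟩
  rw [map_add, map_smul, map_smul, h0, h1, cos_add, sin_add]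
  module

theorem Matrix.orthogonalGroup.integral_sign_inner_mul_sign_inner {n : ℕ} (hn : 2 ≤ n)
    (μ : Measure (orthogonalGroup (Fin n) ℝ)) [IsProbabilityMeasure μ] [μ.IsMulLeftInvariant]
    {e x y : EuclideanSpace ℝ (Fin n)} (he : ‖e‖ = 1) (hx : ‖x‖ = 1) (hy : ‖y‖ = 1) :
    ∫ T : orthogonalGroup (Fin n) ℝ,
        (if 0 ≤ ⟪e, toEuclideanLin (T : Matrix (Fin n) (Fin n) ℝ) x⟫ then (1 : ℝ) else -1) *
        (if 0 ≤ ⟪e, toEuclideanLin (T : Matrix (Fin n) (Fin n) ℝ) y⟫ then (1 : ℝ) else -1) ∂μ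
      = (2 / π) * arcsin ⟪x, y⟫ := by
  obtain ⟨u, hu, hxu, hyu⟩ := exists_inner_eq_zero_and_eq_cos_add_sin hn hx hy
  set θ := arccos ⟪x, y⟫ with hθ
  set s : ℝ → ℝ := fun r => if 0 ≤ r then 1 else -1 with hs
  let c : ℝ → EuclideanSpace ℝ (Fin n) := fun t => cos t • x + sin t • u
  let q : orthogonalGroup (Fin n) ℝ → EuclideanSpace ℝ (Fin n) → ℝ := fun T v =>
    ⟪e, toEuclideanLin (T : Matrix (Fin n) (Fin n) ℝ) v⟫
  change ∫ T, s (q T x) * s (q T y) ∂μ = _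
  have hrot (t : ℝ) : ∫ T, s (q T x) * s (q T y) ∂μ =
      ∫ T, s (q T (c t)) * s (q T (c (t + θ))) ∂μ := by
    obtain ⟨g, hg⟩ := exists_rotate hn hx hu hxu t
    have : μ.IsMulRightInvariant := ⟨map_mul_right_eq_self_of_isProbabilityMeasure μ⟩
    rw [← integral_mul_right_eq_self _ g]
    have hgx : toEuclideanLin (g : Matrix (Fin n) (Fin n) ℝ) x = c t := by
      simpa using hg 0
    have hgy : toEuclideanLin (g : Matrix (Fin n) (Fin n) ℝ) y = c (t + θ) := by
      rw [hyu, hg]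
    simp only [q, toEuclideanLin_mul, hgx, hgy]
  have hqm {φ : ℝ → EuclideanSpace ℝ (Fin n)} (hφ : Continuous φ) :
      Measurable fun p : ℝ × orthogonalGroup (Fin n) ℝ => s (q p.2 (φ p.1)) :=
    measurable_ite_nonneg.comp (continuous_inner_toEuclideanLin.comp
      (f := fun p : ℝ × orthogonalGroup (Fin n) ℝ => (e, p.2, φ p.1)) (by fun_prop)).measurable
  have hint : Integrable (Function.uncurry fun (t : ℝ) T => s (q T (c t)) * s (q T (c (t + θ))))
      ((volume.restrict (Set.Ioc (-π) π)).prod μ) := by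
    refine Integrable.of_bound (C := 1) ((hqm (φ := c) (by fun_prop)).mul
      (hqm (φ := fun t => c (t + θ)) (by fun_prop))).aestronglyMeasurable (.of_forall fun p => ?_)
    simp only [Function.uncurry, hs]
    split_ifs <;> simp
  have hcircle : ∀ᵐ T ∂μ, ∫ t in Set.Ioc (-π) π, s (q T (c t)) * s (q T (c (t + θ))) =
      2 * π - 4 * θ := by
    filter_upwards [ae_inner_toEuclideanLin_ne_zero μ he (u := x) (by rintro rfl; simp at hx)]
      with T hT
    rw [← intervalIntegral.integral_of_le (by linarith [pi_pos]),
      ← integral_sign_mul_sign_rotate hT (arccos_nonneg _) (arccos_le_pi _) (b := q T u)]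
    simp only [c, q, s, map_add, map_smul, inner_add_right, real_inner_smul_right, hθ]
  have hswap := integral_integral_swap hint
  simp only [← hrot] at hswap
  rw [integral_congr_ae hcircle] at hswap
  simp only [integral_const, measureReal_restrict_apply_univ, Real.volume_real_Ioc, probReal_univ,
    smul_eq_mul, one_mul] at hswap
  rw [max_eq_left (by linarith [pi_pos]), hθ, arccos_eq_pi_div_two_sub_arcsin] at hswap
  rw [div_mul_eq_mul_div, eq_div_iff pi_ne_zero]
  linarith
end

theorem stmt_0 (n : ℕ) (hn : 2 ≤ n)
    (e : EuclideanSpace ℝ (Fin n)) (he : ‖e‖ = 1)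
    (f : EuclideanSpace ℝ (Fin n) → ℝ)
    (hf : ∀ v : EuclideanSpace ℝ (Fin n), f v = if 0 ≤ ⟪e, v⟫ then 1 else -1)
    (μ : Measure (Matrix.orthogonalGroup (Fin n) ℝ))
    (hμprob : IsProbabilityMeasure μ)
    (hμinv : ∀ g : Matrix.orthogonalGroup (Fin n) ℝ,
      Measure.map (fun T => g * T) μ = μ)
    (x y : EuclideanSpace ℝ (Fin n)) (hx : ‖x‖ = 1) (hy : ‖y‖ = 1) :
    ∫ T : Matrix.orthogonalGroup (Fin n) ℝ,
        f ((EuclideanSpace.equiv (Fin n) ℝ).symm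
            ((T : Matrix (Fin n) (Fin n) ℝ) *ᵥ (EuclideanSpace.equiv (Fin n) ℝ x))) *
        f ((EuclideanSpace.equiv (Fin n) ℝ).symm
            ((T : Matrix (Fin n) (Fin n) ℝ) *ᵥ (EuclideanSpace.equiv (Fin n) ℝ y))) ∂μ
      = (2 / π) * Real.arcsin ⟪x, y⟫ := by
  have : μ.IsMulLeftInvariant := ⟨hμinv⟩
  simp only [hf]
  exact Matrix.orthogonalGroup.integral_sign_inner_mul_sign_inner hn μ he hx hy
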